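/- Let κ = L and ν(a) = a + χ(a)/2 for a = 1,...,L. Then for each i = 1,...,n, the matrix Dunkl operator d_i satisfies [d_i, f_a] = (1/2)h_a^χ (e_{L−a,L−a+1})_i + (1/2) f_a ((e_{L−a,L−a})_i − (e_{L−a+1,L−a+1})_i) for a = 1,...,L−1, and [d_i, f_0] = −(1/2)(h_1^χ + ··· + h_{L−1}^χ) z_i^{−1}(e_{L1})_i + (1/2) f_0((e_{LL})_i − (e_{11})_i); consequently the degenerate double affine Hecke algebra action π_{κ,ν}(H_n) leaves the subspace U'(b^χ)·𝔙 invariant. -/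

import Mathlib

/-!
All the commutators are instances of one computation. Each `f_b` is a sum over sites
`Σ_k g_k` with `g_k = z_k^δ (e_{pq})_k`, where `(δ, p, q)` is a simple root of `sl_L`
(`δ = 0`, `q = p + 1`) or the affine root (`δ = -1`, `p = L`, `q = 1`), and `d_i` is the sum of
an operator diagonal on basis vectors and of signed two-site operators attached to the pairs
`{i, j}`. Put `h_k = (e_{qq})_k - (e_{pp})_k`.

* A two-site operator `A_{ij}` commutes with `g_k` for `k ≠ i, j`, and
  `[A_{ij}, g_i + g_j] = ½ (h_j g_i - g_j h_i)` (`pairOp_comm`). For a simple root the divided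
  difference commutes with `g_i + g_j` and the right side comes from the `r`-matrix alone. For
  the affine root both parts contribute; here the divided difference of a monomial is written as
  a signed sum over an integer interval (`Osp_eq`), so that lowering one exponent changes it by
  one boundary term (`signedSum_lower_left`, `signedSum_lower_right`).
* The right side is antisymmetric in the two sites, so the sites on both sides of `i` behave
  alike. Summing over `j ≠ i` gives `½ (Σ_j h_j) g_i - ½ (Σ_j g_j) h_i` except for the term
  `j = i`, which is `½ (h_i g_i - g_i h_i) = -g_i`.
* The diagonal part contributes `(κδ + ν(p) - ν(q)) g_i`. For `κ = L` and `ν(a) = a + χ(a)/2`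
  this is `-(1 + c/2) g_i` with `c = χ(q) - χ(p)`: it supplies the missing term `j = i` and
  shifts `Σ_j h_j` by `c` (`dunkl_comm`). In the affine case `Σ_j h_j - c` is
  `-(h_1^χ + ⋯ + h_{L-1}^χ)` by telescoping (`sum_hchi`).

For the invariance, the operators `d_i`, `z_i^{±1}` and `K_{ij} P_{ij}` all preserve weights, hence
commute with every `h_a^χ`. The operators `z_i^{±1}` and `K_{ij} P_{ij}` also commute with every
`f_b`, and the commutator formulas express `d_i f_b` through operators whose images lie in the
ranges of the generators.
-/

noncomputable section

/-!
Matrix Dunkl operators on `𝔙 = ℂ[z_1^{±1},…,z_n^{±1}] ⊗ (ℂ^L)^{⊗n}` and the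
subalgebra `U'(b^χ)`.  `𝔙` has basis the vectors `z^μ ⊗ v_{a}`,
`μ : Fin n → ℤ`, `a : Fin n → Fin L` (spin values 0-based, `v_{a}` meaning
`v_{a+1}`).  The Dunkl operator is
`d_i = κ z_i∂_i + ν_i + n/(2L) − 1/2 + Σ_{j>i}[z_j/(z_j−z_i)(K_{ij}−1)P_{ij} + r_{ij}]
 − Σ_{j<i}[z_i/(z_i−z_j)(K_{ij}−1)P_{ij} + r_{ji}]`, computed explicitly on
monomials.  With `κ = L` and `ν(a) = a + χ(a)/2`, the commutators `[d_i, f_a]`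
have the displayed form, and consequently the degenerate double affine Hecke
algebra action `π_{κ,ν}(H_n)` (generated by the multiplications `z_i^{±1}`, the
operators `K_{i,i+1}P_{i,i+1}` and the `d_i`) leaves `U'(b^χ)·𝔙` invariant, where
`U'(b^χ)` is the non-unital subalgebra of `U(sl_L^)` generated by
`h_a^χ = h_a − (χ(L+1−a) − χ(L−a))·1` (`a = 1,…,L−1`) and `f_0, …, f_{L−1}`.
-/

namespace Dunkl

variable (n L : ℕ)

/-- Basis labels of `𝔙`: a Laurent monomial exponent and a spin configuration. -/
abbrev Bas := (Fin n → ℤ) × (Fin n → Fin L)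

/-- The space `𝔙`. -/
abbrev Vsp := Bas n L →₀ ℂ

/-- The operator `z_j/(z_j−z_i)·(K_{ij}−1)·P_{ij}` evaluated on a basis vector
(a finite geometric sum of monomials). -/
def Osp (i j : Fin n) (p : Bas n L) : Vsp n L :=
  if p.1 j < p.1 i then
    ∑ t ∈ Finset.range (p.1 i - p.1 j).toNat,
      Finsupp.single
        (Function.update (Function.update p.1 i (p.1 j + t)) j (p.1 i - t),
          p.2 ∘ Equiv.swap i j) 1
  else if p.1 i < p.1 j then
    - ∑ t ∈ Finset.range (p.1 j - p.1 i).toNat,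
      Finsupp.single
        (Function.update (Function.update p.1 i (p.1 i + t)) j (p.1 j - t),
          p.2 ∘ Equiv.swap i j) 1
  else 0

/-- The classical `r`-matrix `r_{ij}` evaluated on a basis vector. -/
def rsp (i j : Fin n) (p : Bas n L) : Vsp n L :=
  (if p.2 i = p.2 j then (1 / 2 : ℂ) else 0) • Finsupp.single p 1
    + (if p.2 j < p.2 i then (1 : ℂ) else 0)
        • Finsupp.single (p.1, p.2 ∘ Equiv.swap i j) 1

/-- The matrix Dunkl operator `d_i`. -/
def dunkl (κ : ℂ) (ν : Fin L → ℂ) (i : Fin n) : Vsp n L →ₗ[ℂ] Vsp n L :=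
  Finsupp.lift (Vsp n L) ℂ (Bas n L) fun p =>
    (κ * (p.1 i : ℂ) + ν (p.2 i) + (n : ℂ) / (2 * L) - 1 / 2) • Finsupp.single p 1
    + ∑ j ∈ Finset.univ.filter (fun j => i < j), (Osp n L i j p + rsp n L i j p)
    - ∑ j ∈ Finset.univ.filter (fun j => j < i), (Osp n L j i p + rsp n L j i p)

/-- The matrix unit `(e_{ab})_i` acting on the `i`-th spin factor. -/
def matE (i : Fin n) (a b : Fin L) : Vsp n L →ₗ[ℂ] Vsp n L :=
  Finsupp.lift (Vsp n L) ℂ (Bas n L) fun p =>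
    if p.2 i = b then Finsupp.single (p.1, Function.update p.2 i a) 1 else 0

/-- Multiplication by `z_i^d`. -/
def zshift (i : Fin n) (d : ℤ) : Vsp n L →ₗ[ℂ] Vsp n L :=
  Finsupp.lift (Vsp n L) ℂ (Bas n L) fun p =>
    Finsupp.single (Function.update p.1 i (p.1 i + d), p.2) 1

/-- The operator `K_{ij}P_{ij}` (simultaneous exchange of variables and spins). -/
def swapOp (i j : Fin n) : Vsp n L →ₗ[ℂ] Vsp n L :=
  Finsupp.lift (Vsp n L) ℂ (Bas n L) fun p =>
    Finsupp.single (p.1 ∘ Equiv.swap i j, p.2 ∘ Equiv.swap i j) 1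

/-- The generator `f_b` of the level-0 `sl_L^`-action on `𝔙`
(`f_b = Σ_i (e_{L−b,L−b+1})_i` for `1 ≤ b ≤ L−1`, `f_0 = Σ_i z_i^{-1}(e_{L1})_i`;
spin values 1-based, `Fin L` indices 0-based). -/
def fop (hL : 0 < L) (b : ℕ) (hb : b < L) : Vsp n L →ₗ[ℂ] Vsp n L :=
  if hb0 : b = 0 then
    ∑ i : Fin n, (zshift n L i (-1)) ∘ₗ (matE n L i ⟨L - 1, by omega⟩ ⟨0, hL⟩)
  else
    ∑ i : Fin n, matE n L i ⟨L - b - 1, by omega⟩ ⟨L - b, by omega⟩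

/-- The Cartan generator `h_b = (e_{L−b+1,L−b+1})−(e_{L−b,L−b})` summed over sites. -/
def hop (b : ℕ) : Vsp n L →ₗ[ℂ] Vsp n L :=
  Finsupp.lift (Vsp n L) ℂ (Bas n L) fun p =>
    (∑ i : Fin n, ((if (p.2 i).1 = L - b then (1 : ℂ) else 0)
      - (if (p.2 i).1 = L - b - 1 then (1 : ℂ) else 0))) • Finsupp.single p 1

/-- `h_b^χ = h_b − (χ(L+1−b) − χ(L−b))·1`. -/
def hchi (χ : ℕ → ℂ) (b : ℕ) : Vsp n L →ₗ[ℂ] Vsp n L :=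
  hop n L b - (χ (L + 1 - b) - χ (L - b)) • LinearMap.id

/-- The subspace `U'(b^χ)·𝔙`: the sum of the ranges of the generators
`h_1^χ,…,h_{L−1}^χ, f_0,…,f_{L−1}` of the non-unital algebra `U'(b^χ)`. -/
def Usub (hL : 0 < L) (χ : ℕ → ℂ) : Submodule ℂ (Vsp n L) :=
  (⨆ b ∈ Finset.Ico 1 L, LinearMap.range (hchi n L χ b)) ⊔
  (⨆ b : Fin L, LinearMap.range (fop n L hL b.1 b.2))

/-! ### Operators on basis vectors -/

theorem ext_bas {n L : ℕ} {S T : Vsp n L →ₗ[ℂ] Vsp n L}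
    (h : ∀ p : Bas n L, S (Finsupp.single p 1) = T (Finsupp.single p 1)) : S = T := by
  apply Finsupp.lhom_ext'
  intro p
  ext1
  simpa using h p

theorem lift_single (F : Bas n L → Vsp n L) (p : Bas n L) :
    (Finsupp.lift (Vsp n L) ℂ (Bas n L) F) (Finsupp.single p 1) = F p := by
  simp [Finsupp.lift_apply]

/-- The one-site operator `z_k^δ (e_{pq})_k`; it covers the matrix units (`δ = 0`) and the
summands of every `f_b`. -/
def siteOp (δ : ℤ) (p q : Fin L) (k : Fin n) : Module.End ℂ (Vsp n L) :=
  Finsupp.lift (Vsp n L) ℂ (Bas n L) fun v =>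
    if v.2 k = q then
      Finsupp.single (Function.update v.1 k (v.1 k + δ), Function.update v.2 k p) 1 else 0

/-- The one-site Cartan element `(e_{qq})_k − (e_{pp})_k`. -/
def siteH (p q : Fin L) (k : Fin n) : Module.End ℂ (Vsp n L) :=
  Finsupp.lift (Vsp n L) ℂ (Bas n L) fun v =>
    ((if v.2 k = q then (1 : ℂ) else 0) - (if v.2 k = p then (1 : ℂ) else 0)) • Finsupp.single v 1

/-- The two-site part `z_j/(z_j−z_i)(K_{ij}−1)P_{ij} + r_{ij}` of the Dunkl operator. -/
def pairOp (i j : Fin n) : Module.End ℂ (Vsp n L) :=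
  Finsupp.lift (Vsp n L) ℂ (Bas n L) fun p => Osp n L i j p + rsp n L i j p

/-- The one-site part of the Dunkl operator, diagonal on basis vectors. -/
def diagOp (κ : ℂ) (ν : Fin L → ℂ) (i : Fin n) : Module.End ℂ (Vsp n L) :=
  Finsupp.lift (Vsp n L) ℂ (Bas n L) fun p =>
    (κ * (p.1 i : ℂ) + ν (p.2 i) + (n : ℂ) / (2 * L) - 1 / 2) • Finsupp.single p 1

/-- The contribution of the site `j` to `d_i`, with its sign and the order of the two sites. -/
def signedPair (i j : Fin n) : Module.End ℂ (Vsp n L) :=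
  if i < j then pairOp n L i j else if j < i then (-1 : ℂ) • pairOp n L j i else 0

theorem dunkl_eq (κ : ℂ) (ν : Fin L → ℂ) (i : Fin n) :
    dunkl n L κ ν i = diagOp n L κ ν i + ∑ j, signedPair n L i j := by
  apply ext_bas
  intro p
  have h : ∀ j, signedPair n L i j (Finsupp.single p 1)
      = (if i < j then Osp n L i j p + rsp n L i j p else 0)
        - (if j < i then Osp n L j i p + rsp n L j i p else 0) := by
    intro j
    unfold signedPair pairOp
    split_ifs with h1 h2 h2
    · exact absurd h1 (lt_asymm h2)
    · simp only [lift_single, sub_zero]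
    · simp only [LinearMap.smul_apply, lift_single, zero_sub, neg_smul, one_smul]
    · simp
  simp only [dunkl, diagOp, LinearMap.add_apply, LinearMap.sum_apply, h, lift_single,
    Finset.sum_sub_distrib, Finset.sum_filter]
  abel

theorem matE_eq (i : Fin n) (a b : Fin L) : matE n L i a b = siteOp n L 0 a b i := by
  apply ext_bas
  intro p
  simp [matE, siteOp]

theorem zshift_matE (i : Fin n) (d : ℤ) (a b : Fin L) :
    zshift n L i d ∘ₗ matE n L i a b = siteOp n L d a b i := by
  apply ext_bas
  intro p
  simp only [LinearMap.comp_apply, matE, siteOp, lift_single, zshift]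
  split_ifs
  · rw [lift_single]
  · simp

theorem hop_eq (a : ℕ) (ha1 : 1 ≤ a) (ha2 : a < L) :
    hop n L a = ∑ k, siteH n L ⟨L - a - 1, by omega⟩ ⟨L - a, by omega⟩ k := by
  apply ext_bas
  intro p
  simp only [hop, lift_single, LinearMap.sum_apply, siteH, Finset.sum_smul, Fin.ext_iff]

/-! ### The divided difference as a signed interval sum -/

/-- The signed sum of `f` over the integer interval between `b` and `a`, i.e. `S a − S b` for
a discrete primitive `S` of `f`. -/
def signedSum {V : Type*} [AddCommGroup V] (f : ℤ → V) (a b : ℤ) : V :=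
  ∑ x ∈ Finset.Ico b a, f x - ∑ x ∈ Finset.Ico a b, f x

theorem signedSum_pred_left {V : Type*} [AddCommGroup V] (f : ℤ → V) (a b : ℤ) :
    signedSum f (a - 1) b = signedSum f a b - f (a - 1) := by
  unfold signedSum
  rcases lt_or_ge b a with h | h
  · have h1 : Finset.Ico b a = insert (a - 1) (Finset.Ico b (a - 1)) := by
      ext x; simp; omega
    rw [h1, Finset.sum_insert (by simp), Finset.Ico_eq_empty (by omega : ¬ a < b),
      Finset.Ico_eq_empty (by omega : ¬ a - 1 < b)]
    abel
  · have h1 : Finset.Ico (a - 1) b = insert (a - 1) (Finset.Ico a b) := by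
      ext x; simp; omega
    rw [h1, Finset.sum_insert (by simp), Finset.Ico_eq_empty (by omega : ¬ b < a),
      Finset.Ico_eq_empty (by omega : ¬ b < a - 1)]
    abel

theorem signedSum_swap {V : Type*} [AddCommGroup V] (f : ℤ → V) (a b : ℤ) :
    signedSum f b a = - signedSum f a b := by
  unfold signedSum; abel

theorem signedSum_pred_right {V : Type*} [AddCommGroup V] (f : ℤ → V) (a b : ℤ) :
    signedSum f a (b - 1) = signedSum f a b + f (b - 1) := by
  rw [signedSum_swap, signedSum_pred_left, signedSum_swap]; abel

theorem signedSum_shift {V : Type*} [AddCommGroup V] (f : ℤ → V) (a b : ℤ) :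
    signedSum (fun t => f (t - 1)) a b = signedSum f (a - 1) (b - 1) := by
  have h : ∀ u v : ℤ, ∑ x ∈ Finset.Ico u v, f (x - 1) = ∑ x ∈ Finset.Ico (u - 1) (v - 1), f x := by
    intro u v
    refine Finset.sum_bij' (fun x _ => x - 1) (fun x _ => x + 1) ?_ ?_ ?_ ?_ ?_ <;>
      simp
    omega
  simp only [signedSum, h]

theorem signedSum_zero {V : Type*} [AddCommGroup V] (a b : ℤ) :
    signedSum (fun _ => (0 : V)) a b = 0 := by
  simp [signedSum]

theorem map_signedSum {V W : Type*} [AddCommGroup V] [AddCommGroup W] [Module ℂ V] [Module ℂ W]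
    (T : V →ₗ[ℂ] W) (f : ℤ → V) (a b : ℤ) :
    T (signedSum f a b) = signedSum (fun t => T (f t)) a b := by
  simp [signedSum, map_sum]

theorem sum_range_eq_sum_Ico {V : Type*} [AddCommGroup V] (f : ℤ → V) (a b : ℤ) (h : b < a) :
    ∑ t ∈ Finset.range (a - b).toNat, f (b + t) = ∑ x ∈ Finset.Ico b a, f x := by
  refine Finset.sum_bij' (fun t _ => b + (t : ℤ)) (fun x _ => (x - b).toNat) ?_ ?_ ?_ ?_ ?_ <;>
    simp <;> intros <;> omega

/-- In a divided difference of a monomial only the exponents at the two sites change, and their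
sum is constant. -/
theorem Osp_eq (i j : Fin n) (p : Bas n L) :
    Osp n L i j p = signedSum (fun x => Finsupp.single
      (Function.update (Function.update p.1 i x) j (p.1 i + p.1 j - x),
        p.2 ∘ Equiv.swap i j) 1) (p.1 i) (p.1 j) := by
  unfold Osp signedSum
  split_ifs with h1 h2
  · rw [Finset.Ico_eq_empty (by omega : ¬ p.1 i < p.1 j), Finset.sum_empty, sub_zero,
      ← sum_range_eq_sum_Ico _ _ _ h1]
    refine Finset.sum_congr rfl fun t _ => ?_
    rw [show p.1 i + p.1 j - (p.1 j + t) = p.1 i - t by ring]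
  · rw [Finset.Ico_eq_empty (by omega : ¬ p.1 j < p.1 i), Finset.sum_empty, zero_sub,
      ← sum_range_eq_sum_Ico _ _ _ h2]
    congr 1
    refine Finset.sum_congr rfl fun t _ => ?_
    rw [show p.1 i + p.1 j - (p.1 i + t) = p.1 j - t by ring]
  · rw [Finset.Ico_eq_empty (by omega : ¬ p.1 j < p.1 i),
      Finset.Ico_eq_empty (by omega : ¬ p.1 i < p.1 j)]
    simp

/-! ### Commutators of the two-site operators with the one-site operators -/

theorem comp_swap_eq_update {α : Type*} (s : Fin n → α) (i j : Fin n) :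
    s ∘ Equiv.swap i j = Function.update (Function.update s i (s j)) j (s i) := by
  funext k
  simp only [Function.comp_apply, Function.update_apply, Equiv.swap_apply_def]
  split_ifs <;> simp_all

/-- The basis vector obtained from `(m, s)` by prescribing the exponents `x`, `y` and the spins
`a`, `b` at the sites `i`, `j`. -/
def twoSite (m : Fin n → ℤ) (s : Fin n → Fin L) (i j : Fin n) (x y : ℤ) (a b : Fin L) : Vsp n L :=
  Finsupp.single (Function.update (Function.update m i x) j y,
    Function.update (Function.update s i a) j b) 1

theorem siteH_twoSite_left (p q : Fin L) (m : Fin n → ℤ) (s : Fin n → Fin L)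
    {i j : Fin n} (hij : i ≠ j) (x y : ℤ) (a b : Fin L) :
    siteH n L p q i (twoSite n L m s i j x y a b)
      = ((if a = q then (1 : ℂ) else 0) - (if a = p then (1 : ℂ) else 0))
        • twoSite n L m s i j x y a b := by
  simp only [siteH, twoSite, lift_single, Function.update_of_ne hij, Function.update_self]

theorem siteH_twoSite_right (p q : Fin L) (m : Fin n → ℤ) (s : Fin n → Fin L)
    (i j : Fin n) (x y : ℤ) (a b : Fin L) :
    siteH n L p q j (twoSite n L m s i j x y a b)
      = ((if b = q then (1 : ℂ) else 0) - (if b = p then (1 : ℂ) else 0))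
        • twoSite n L m s i j x y a b := by
  simp only [siteH, twoSite, lift_single, Function.update_self]

theorem siteOp_twoSite_left (δ : ℤ) (p q : Fin L) (m : Fin n → ℤ) (s : Fin n → Fin L)
    {i j : Fin n} (hij : i ≠ j) (x y : ℤ) (a b : Fin L) :
    siteOp n L δ p q i (twoSite n L m s i j x y a b)
      = if a = q then twoSite n L m s i j (x + δ) y p b else 0 := by
  simp only [siteOp, twoSite, lift_single, Function.update_of_ne hij, Function.update_self]
  split_ifs
  · rw [Function.update_comm hij.symm, Function.update_comm hij.symm]
    simp
  · rfl

theorem siteOp_twoSite_right (δ : ℤ) (p q : Fin L) (m : Fin n → ℤ) (s : Fin n → Fin L)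
    (i j : Fin n) (x y : ℤ) (a b : Fin L) :
    siteOp n L δ p q j (twoSite n L m s i j x y a b)
      = if b = q then twoSite n L m s i j x (y + δ) a p else 0 := by
  simp only [siteOp, twoSite, lift_single, Function.update_self, Function.update_idem]

theorem pairOp_twoSite (m : Fin n → ℤ) (s : Fin n → Fin L)
    {i j : Fin n} (hij : i ≠ j) (x y : ℤ) (a b : Fin L) :
    pairOp n L i j (twoSite n L m s i j x y a b)
      = signedSum (fun t => twoSite n L m s i j t (x + y - t) b a) x y
        + ((if a = b then (1 / 2 : ℂ) else 0) • twoSite n L m s i j x y a b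
          + (if b < a then (1 : ℂ) else 0) • twoSite n L m s i j x y b a) := by
  have hm : ∀ {α : Type} (f : Fin n → α) (x y x' y' : α), Function.update (Function.update
      (Function.update (Function.update f i x) j y) i x') j y'
      = Function.update (Function.update f i x') j y' := by
    intro α f x y x' y'
    rw [Function.update_comm hij.symm, Function.update_idem, Function.update_idem]
  simp only [pairOp, twoSite, lift_single, Osp_eq, rsp, comp_swap_eq_update,
    Function.update_of_ne hij, Function.update_self, hm]

theorem siteOp_pairOp_comm (δ : ℤ) (p q : Fin L) {i j k : Fin n} (hi : k ≠ i) (hj : k ≠ j) :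
    pairOp n L i j * siteOp n L δ p q k = siteOp n L δ p q k * pairOp n L i j := by
  apply ext_bas
  rintro ⟨m, s⟩
  simp only [Module.End.mul_apply]
  have hs : ∀ (m' : Fin n → ℤ) (s' : Fin n → Fin L), siteOp n L δ p q k (Finsupp.single (m', s') 1)
      = if s' k = q then
        Finsupp.single (Function.update m' k (m' k + δ), Function.update s' k p) 1 else 0 := by
    intro m' s'; simp only [siteOp, lift_single]
  have hm : ∀ {α : Type} (f : Fin n → α) (z x y : α), Function.update (Function.update
      (Function.update f i x) j y) k z
      = Function.update (Function.update (Function.update f k z) i x) j y := by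
    intro α f z x y
    rw [Function.update_comm hj.symm, Function.update_comm hi.symm]
  rw [hs]
  by_cases hq : s k = q
  · simp only [pairOp, lift_single, Osp_eq, rsp, comp_swap_eq_update, map_add, map_smul,
      map_signedSum, hs, Function.update_of_ne hi, Function.update_of_ne hj, hm,
      Function.update_of_ne hi.symm, Function.update_of_ne hj.symm, hq, if_true]
  · simp only [pairOp, lift_single, Osp_eq, rsp, comp_swap_eq_update, map_add, map_smul,
      map_signedSum, hs, Function.update_of_ne hi, Function.update_of_ne hj, hq, if_false,
      signedSum_zero, map_zero, smul_zero, add_zero]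

theorem twoSite_self (m : Fin n → ℤ) (s : Fin n → Fin L) (i j : Fin n) :
    (Finsupp.single (m, s) 1 : Vsp n L) = twoSite n L m s i j (m i) (m j) (s i) (s j) := by
  simp [twoSite]

/-- The relation `M z_i^{-1} = z_j^{-1} M − z_i^{-1}` for `M = z_j/(z_j−z_i)(K_{ij}−1)`. -/
theorem signedSum_lower_left {V : Type*} [AddCommGroup V] (U : ℤ → ℤ → V) (x y : ℤ) :
    signedSum (fun t => U t (x + -1 + y - t)) (x + -1) y
      = signedSum (fun t => U t (x + y - t + -1)) x y - U (x + -1) y := by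
  rw [← sub_eq_add_neg, signedSum_pred_left]
  congr 1
  · congr 1; funext t; congr 1; ring
  · congr 1; ring

/-- The relation `M z_j^{-1} = z_i^{-1} M + z_i^{-1}` for `M = z_j/(z_j−z_i)(K_{ij}−1)`. -/
theorem signedSum_lower_right {V : Type*} [AddCommGroup V] (U : ℤ → ℤ → V) (x y : ℤ) :
    signedSum (fun t => U t (x + (y + -1) - t)) x (y + -1)
      = signedSum (fun t => U (t + -1) (x + y - t)) x y + U (x + -1) y := by
  have h := signedSum_shift (fun t => U t (x + y - 1 - t)) x y
  have e : (fun t => U (t + -1) (x + y - t)) = fun t => U (t - 1) (x + y - 1 - (t - 1)) := by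
    funext t; congr 1; ring
  have e' : (fun t => U t (x + (y + -1) - t)) = fun t => U t (x + y - 1 - t) := by
    funext t; congr 1; ring
  rw [e, h, e', signedSum_pred_left, ← sub_eq_add_neg y 1, ← sub_eq_add_neg x 1]
  rw [show x + y - 1 - (x - 1) = y by ring]
  abel

/-- The pairs `(p, q)` and degrees `δ` of the generators `f_b`: a simple root vector of `sl_L`,
or the affine one. -/
def IsSimple (δ : ℤ) (p q : Fin L) : Prop :=
  (δ = 0 ∧ p.1 + 1 = q.1) ∨ (δ = -1 ∧ p.1 + 1 = L ∧ q.1 = 0 ∧ p ≠ q)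

/-- The two-site identity behind the commutators `[d_i, f_b]`. The divided difference commutes
with `f_b` up to the affine correction `z_i^{-1}((e_{pq})_i − (e_{pq})_j)P_{ij}`, and the
remaining terms come from the `r`-matrix. -/
theorem pairOp_comm {δ : ℤ} {p q : Fin L} (h : IsSimple L δ p q) {i j : Fin n} (hij : i ≠ j) :
    pairOp n L i j * (siteOp n L δ p q i + siteOp n L δ p q j)
        + (1 / 2 : ℂ) • (siteOp n L δ p q j * siteH n L p q i)
      = (siteOp n L δ p q i + siteOp n L δ p q j) * pairOp n L i j
        + (1 / 2 : ℂ) • (siteH n L p q j * siteOp n L δ p q i) := by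
  apply ext_bas
  rintro ⟨m, s⟩
  rw [twoSite_self n L m s i j]
  generalize m i = x
  generalize m j = y
  generalize s i = a
  generalize s j = b
  simp only [LinearMap.add_apply, LinearMap.smul_apply, Module.End.mul_apply,
    siteH_twoSite_left n L _ _ m s hij, siteOp_twoSite_left n L _ _ _ m s hij,
    siteOp_twoSite_right, pairOp_twoSite n L m s hij, map_add, map_smul, map_signedSum]
  have hpq : p ≠ q := by
    rcases h with ⟨_, h⟩ | ⟨_, _, _, h⟩
    · rintro rfl; omega
    · exact h
  have tri : ∀ c : Fin L, q = c ∨ p = c ∨ (c ≠ q ∧ q ≠ c ∧ c ≠ p ∧ p ≠ c) := by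
    intro c
    by_cases h1 : q = c
    · exact Or.inl h1
    · by_cases h2 : p = c
      · exact Or.inr (Or.inl h2)
      · exact Or.inr (Or.inr ⟨Ne.symm h1, h1, Ne.symm h2, h2⟩)
  have hqp := hpq.symm
  rcases h with ⟨rfl, h⟩ | ⟨rfl, hp, hq, -⟩
  · -- `p` and `q` are neighbours, so any third value compares equally with both of them
    have h1 : p < q := Fin.lt_def.2 (by omega)
    have h2 : ¬ q < p := lt_asymm h1
    have h3 : ∀ c : Fin L, c ≠ p → c ≠ q → (c < q ↔ c < p) := by
      intro c; simp only [Fin.lt_def, ne_eq, Fin.ext_iff]; omega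
    have h4 : ∀ c : Fin L, c ≠ p → c ≠ q → (q < c ↔ p < c) := by
      intro c; simp only [Fin.lt_def, ne_eq, Fin.ext_iff]; omega
    rcases tri a with rfl | rfl | ⟨ha, ha', ha'', ha'''⟩ <;>
    rcases tri b with rfl | rfl | ⟨hb, hb', hb'', hb'''⟩ <;>
    simp only [*, if_true, if_false, pairOp_twoSite n L m s hij, map_zero,
      siteH_twoSite_right, ne_eq, not_false_eq_true, signedSum_zero, lt_self_iff_false, add_zero] <;>
    module
  · -- `p` is the largest value and `q` the smallest
    have h1 : ∀ c : Fin L, c ≠ p → c < p := by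
      intro c; have := c.2; simp only [Fin.lt_def, ne_eq, Fin.ext_iff]; omega
    have h2 : ∀ c : Fin L, ¬ p < c := by
      intro c; have := c.2; simp only [Fin.lt_def]; omega
    have h3 : ∀ c : Fin L, c ≠ q → q < c := by
      intro c; simp only [Fin.lt_def, ne_eq, Fin.ext_iff]; omega
    have h4 : ∀ c : Fin L, ¬ c < q := by
      intro c; simp only [Fin.lt_def]; omega
    have hl := fun a b => signedSum_lower_left (fun u v => twoSite n L m s i j u v a b) x y
    have hr := fun a b => signedSum_lower_right (fun u v => twoSite n L m s i j u v a b) x y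
    rcases tri a with rfl | rfl | ⟨ha, ha', ha'', ha'''⟩ <;>
    rcases tri b with rfl | rfl | ⟨hb, hb', hb'', hb'''⟩ <;>
    simp only [*, if_true, if_false, pairOp_twoSite n L m s hij,
      map_zero, siteH_twoSite_right, ne_eq, not_false_eq_true, signedSum_zero, add_zero] <;>
    module

/-! ### Assembly of the commutators -/

theorem diagOp_comm_ne (κ : ℂ) (ν : Fin L → ℂ) (δ : ℤ) (p q : Fin L) {i k : Fin n} (h : k ≠ i) :
    diagOp n L κ ν i * siteOp n L δ p q k = siteOp n L δ p q k * diagOp n L κ ν i := by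
  apply ext_bas
  intro v
  simp only [Module.End.mul_apply, diagOp, siteOp, lift_single, map_smul]
  split_ifs
  · rw [lift_single]
    simp only [Function.update_of_ne h.symm]
  · simp

theorem diagOp_comm_self (κ : ℂ) (ν : Fin L → ℂ) (δ : ℤ) (p q : Fin L) (i : Fin n) :
    diagOp n L κ ν i * siteOp n L δ p q i
      = siteOp n L δ p q i * diagOp n L κ ν i + (κ * δ + ν p - ν q) • siteOp n L δ p q i := by
  apply ext_bas
  intro v
  simp only [LinearMap.add_apply, LinearMap.smul_apply, Module.End.mul_apply, diagOp, siteOp,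
    lift_single, map_smul]
  split_ifs with h
  · rw [lift_single]
    simp only [Function.update_self, h]
    push_cast
    module
  · simp

theorem siteOp_mul_siteH (δ : ℤ) {p q : Fin L} (h : p ≠ q) (i : Fin n) :
    siteOp n L δ p q i * siteH n L p q i = siteOp n L δ p q i := by
  apply ext_bas
  intro v
  simp only [Module.End.mul_apply, siteOp, siteH, lift_single, map_smul]
  by_cases hv : v.2 i = q
  · simp [hv, h.symm]
  · simp [hv]

theorem siteH_mul_siteOp (δ : ℤ) {p q : Fin L} (h : p ≠ q) (i : Fin n) :
    siteH n L p q i * siteOp n L δ p q i = (-1 : ℂ) • siteOp n L δ p q i := by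
  apply ext_bas
  intro v
  simp only [Module.End.mul_apply, LinearMap.smul_apply, siteOp, siteH, lift_single]
  by_cases hv : v.2 i = q
  · simp only [hv, if_true, lift_single, Function.update_self, h, if_false, zero_sub]
  · simp [hv]

theorem signedPair_comm_ne (δ : ℤ) (p q : Fin L) {i j k : Fin n} (hi : k ≠ i) (hj : k ≠ j) :
    signedPair n L i j * siteOp n L δ p q k = siteOp n L δ p q k * signedPair n L i j := by
  unfold signedPair
  split_ifs
  · exact siteOp_pairOp_comm n L δ p q hi hj
  · rw [smul_mul_assoc, mul_smul_comm, siteOp_pairOp_comm n L δ p q hj hi]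
  · simp

theorem siteH_siteOp_comm (δ : ℤ) (p q : Fin L) {i j : Fin n} (h : i ≠ j) :
    siteH n L p q i * siteOp n L δ p q j = siteOp n L δ p q j * siteH n L p q i := by
  apply ext_bas
  intro v
  simp only [Module.End.mul_apply, siteOp, siteH, lift_single, map_smul]
  by_cases hv : v.2 j = q
  · simp only [hv, if_true, lift_single, Function.update_of_ne h]
  · simp [hv]

/-- The two orders of the sites `i`, `j` give the same commutator, because `½(h_j f_i − f_j h_i)`
is antisymmetric under exchange of the sites, like `signedPair`. -/
theorem signedPair_comm {δ : ℤ} {p q : Fin L} (h : IsSimple L δ p q) {i j : Fin n} (hij : i ≠ j) :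
    signedPair n L i j * (∑ k, siteOp n L δ p q k)
        + (1 / 2 : ℂ) • (siteOp n L δ p q j * siteH n L p q i)
      = (∑ k, siteOp n L δ p q k) * signedPair n L i j
        + (1 / 2 : ℂ) • (siteH n L p q j * siteOp n L δ p q i) := by
  have hsplit : ∑ k, siteOp n L δ p q k = (siteOp n L δ p q i + siteOp n L δ p q j)
      + ∑ k ∈ (Finset.univ.erase i).erase j, siteOp n L δ p q k := by
    rw [add_assoc, Finset.add_sum_erase _ _ (Finset.mem_erase.2 ⟨hij.symm, Finset.mem_univ j⟩),
      Finset.add_sum_erase _ _ (Finset.mem_univ i)]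
  have hrest : signedPair n L i j * (∑ k ∈ (Finset.univ.erase i).erase j, siteOp n L δ p q k)
      = (∑ k ∈ (Finset.univ.erase i).erase j, siteOp n L δ p q k) * signedPair n L i j := by
    rw [Finset.mul_sum, Finset.sum_mul]
    refine Finset.sum_congr rfl fun k hk => ?_
    simp only [Finset.mem_erase] at hk
    exact signedPair_comm_ne n L δ p q hk.2.1 hk.1
  rw [hsplit, mul_add, add_mul _ _ (signedPair n L i j), hrest, add_right_comm,
    add_right_comm _ _ ((1 / 2 : ℂ) • _)]
  refine congrArg (· + _) ?_
  rcases lt_or_gt_of_ne hij with hlt | hlt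
  · simp only [signedPair, if_pos hlt]
    exact pairOp_comm n L h hij
  · simp only [signedPair, if_neg (lt_asymm hlt), if_pos hlt]
    have e := pairOp_comm n L h hij.symm
    rw [siteH_siteOp_comm n L δ p q hij, ← siteH_siteOp_comm n L δ p q hij.symm,
      add_comm (siteOp n L δ p q j)] at e
    rw [smul_mul_assoc, mul_smul_comm]
    generalize pairOp n L j i * (siteOp n L δ p q i + siteOp n L δ p q j) = A at *
    generalize (siteOp n L δ p q i + siteOp n L δ p q j) * pairOp n L j i = B at *
    generalize siteH n L p q j * siteOp n L δ p q i = C at *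
    generalize siteOp n L δ p q j * siteH n L p q i = D at *
    calc (-1 : ℂ) • A + (1 / 2 : ℂ) • D
        = (-1 : ℂ) • (A + (1 / 2 : ℂ) • C) + (1 / 2 : ℂ) • C + (1 / 2 : ℂ) • D := by module
      _ = (-1 : ℂ) • B + (1 / 2 : ℂ) • C := by rw [e]; module

/-- All the commutators `[d_i, f_b]` at once; `c` is the shift of the Cartan part by `χ`. -/
theorem dunkl_comm {δ : ℤ} {p q : Fin L} (h : IsSimple L δ p q) (κ c : ℂ) (ν : Fin L → ℂ)
    (hc : κ * δ + ν p - ν q = -1 - c / 2) (i : Fin n) :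
    dunkl n L κ ν i * (∑ k, siteOp n L δ p q k)
        + (1 / 2 : ℂ) • ((∑ k, siteOp n L δ p q k) * siteH n L p q i)
        + (c / 2) • siteOp n L δ p q i
      = (∑ k, siteOp n L δ p q k) * dunkl n L κ ν i
        + (1 / 2 : ℂ) • ((∑ k, siteH n L p q k) * siteOp n L δ p q i) := by
  have hpq : p ≠ q := by
    rcases h with ⟨_, h⟩ | ⟨_, _, _, h⟩
    · rintro rfl; omega
    · exact h
  have hD : diagOp n L κ ν i * (∑ k, siteOp n L δ p q k)
      = (∑ k, siteOp n L δ p q k) * diagOp n L κ ν i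
        + (κ * δ + ν p - ν q) • siteOp n L δ p q i := by
    have hk : ∀ k, diagOp n L κ ν i * siteOp n L δ p q k = siteOp n L δ p q k * diagOp n L κ ν i
        + if k = i then (κ * δ + ν p - ν q) • siteOp n L δ p q i else 0 := by
      intro k
      split_ifs with hk
      · rw [hk, diagOp_comm_self]
      · rw [diagOp_comm_ne n L κ ν δ p q hk, add_zero]
    rw [Finset.mul_sum, Finset.sum_mul, Finset.sum_congr rfl fun k _ => hk k,
      Finset.sum_add_distrib]
    simp
  have hP : (∑ j, signedPair n L i j) * (∑ k, siteOp n L δ p q k)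
        + (1 / 2 : ℂ) • ((∑ k, siteOp n L δ p q k) * siteH n L p q i)
      = (∑ k, siteOp n L δ p q k) * (∑ j, signedPair n L i j)
        + (1 / 2 : ℂ) • ((∑ k, siteH n L p q k) * siteOp n L δ p q i) + siteOp n L δ p q i := by
    -- on the right the sum over the sites contains the term `j = i`, which has to be compensated
    have hj : ∀ j, signedPair n L i j * (∑ k, siteOp n L δ p q k)
          + (1 / 2 : ℂ) • (siteOp n L δ p q j * siteH n L p q i)
        = (∑ k, siteOp n L δ p q k) * signedPair n L i j
          + (1 / 2 : ℂ) • (siteH n L p q j * siteOp n L δ p q i)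
          + if j = i then siteOp n L δ p q i else 0 := by
      intro j
      split_ifs with hj
      · subst hj
        rw [siteOp_mul_siteH n L δ hpq, siteH_mul_siteOp n L δ hpq]
        simp only [signedPair, lt_self_iff_false, if_false, zero_mul, mul_zero]
        module
      · rw [add_zero]
        exact signedPair_comm n L h (Ne.symm hj)
    have hsum := Finset.sum_congr (rfl : (Finset.univ : Finset (Fin n)) = Finset.univ)
      fun j _ => hj j
    simp only [Finset.sum_add_distrib, ← Finset.smul_sum, ← Finset.sum_mul,
      ← Finset.mul_sum Finset.univ (signedPair n L i)] at hsum
    simpa using hsum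
  have hd := dunkl_eq n L κ ν i
  rw [hc] at hD
  rw [hd, add_mul (diagOp n L κ ν i), mul_add _ (diagOp n L κ ν i), add_assoc (_ * _) (_ * _), hP,
    hD]
  generalize (∑ k, siteOp n L δ p q k) * diagOp n L κ ν i = A
  generalize (∑ k, siteOp n L δ p q k) * ∑ j, signedPair n L i j = B
  generalize (∑ k, siteH n L p q k) * siteOp n L δ p q i = C
  generalize siteOp n L δ p q i = D
  apply LinearMap.ext
  intro v
  simp only [LinearMap.add_apply, LinearMap.smul_apply]
  module

theorem siteH_apply (p q : Fin L) (k : Fin n) (v : Vsp n L) :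
    siteH n L p q k v = siteOp n L 0 q q k v - siteOp n L 0 p p k v := by
  rw [← LinearMap.sub_apply]
  congr 1
  apply ext_bas
  intro v
  simp only [siteH, siteOp, lift_single, LinearMap.sub_apply, sub_smul]
  congr 1
  · by_cases h : v.2 k = q
    · simp [← h]
    · simp [h]
  · by_cases h : v.2 k = p
    · simp [← h]
    · simp [h]

/-- `dunkl_comm` in the shape of the displayed commutators. -/
theorem dunkl_comm_sub {δ : ℤ} {p q : Fin L} (h : IsSimple L δ p q) (κ c : ℂ) (ν : Fin L → ℂ)
    (hc : κ * δ + ν p - ν q = -1 - c / 2) (i : Fin n) :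
    dunkl n L κ ν i ∘ₗ (∑ k, siteOp n L δ p q k) - (∑ k, siteOp n L δ p q k) ∘ₗ dunkl n L κ ν i
      = (1 / 2 : ℂ) • (((∑ k, siteH n L p q k) - c • LinearMap.id) ∘ₗ siteOp n L δ p q i)
        + (1 / 2 : ℂ) • ((∑ k, siteOp n L δ p q k)
            ∘ₗ (siteOp n L 0 p p i - siteOp n L 0 q q i)) := by
  apply LinearMap.ext
  intro v
  have e := LinearMap.congr_fun (dunkl_comm n L h κ c ν hc i) v
  have hH : siteOp n L 0 p p i v - siteOp n L 0 q q i v = - siteH n L p q i v := by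
    rw [siteH_apply]; module
  generalize (∑ k, siteOp n L δ p q k) = G at *
  generalize (∑ k, siteH n L p q k) = H at *
  simp only [LinearMap.add_apply, LinearMap.smul_apply, Module.End.mul_apply] at e
  simp only [LinearMap.add_apply, LinearMap.smul_apply, LinearMap.comp_apply,
    LinearMap.sub_apply, LinearMap.id_apply, hH, map_neg]
  linear_combination (norm := module) e

theorem sum_Ico_telescope (F : ℕ → ℂ) {M : ℕ} (hM : 1 ≤ M) :
    ∑ a ∈ Finset.Ico 1 M, (F (M - a) - F (M - a - 1)) = F (M - 1) - F 0 := by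
  have h : ∀ m, 1 ≤ m → m ≤ M →
      ∑ a ∈ Finset.Ico 1 m, (F (M - a) - F (M - a - 1)) = F (M - 1) - F (M - m) := by
    intro m hm
    induction m, hm using Nat.le_induction with
    | base => simp
    | succ m hm ih =>
      intro hmM
      rw [Finset.sum_Ico_succ_top hm, ih (by omega), Nat.sub_sub M m 1]
      ring
  rw [h M hM le_rfl, Nat.sub_self]

/-- The sum `h_1^χ + ⋯ + h_{L−1}^χ` is minus the shifted Cartan element attached to the affine
root. -/
theorem sum_hchi (hL : 2 ≤ L) (χ : ℕ → ℂ) :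
    ∑ a ∈ Finset.Ico 1 L, hchi n L χ a
      = (-1 : ℂ) • ((∑ k, siteH n L ⟨L - 1, by omega⟩ ⟨0, by omega⟩ k)
        - (χ 1 - χ L) • LinearMap.id) := by
  have hχ : ∑ a ∈ Finset.Ico 1 L, (χ (L + 1 - a) - χ (L - a)) = χ L - χ 1 := by
    have := sum_Ico_telescope (fun x => χ (x + 1)) (by omega : 1 ≤ L)
    rw [show L - 1 + 1 = L by omega, zero_add] at this
    rw [← this]
    refine Finset.sum_congr rfl fun a ha => ?_
    rw [Finset.mem_Ico] at ha
    rw [show L - a - 1 + 1 = L - a by omega, show L + 1 - a = L - a + 1 by omega]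
  apply ext_bas
  intro v
  have hk : ∀ k, ∑ a ∈ Finset.Ico 1 L, ((if (v.2 k).1 = L - a then (1 : ℂ) else 0)
      - (if (v.2 k).1 = L - a - 1 then (1 : ℂ) else 0))
      = (if (v.2 k).1 = L - 1 then (1 : ℂ) else 0) - (if (v.2 k).1 = 0 then (1 : ℂ) else 0) :=
    fun k => sum_Ico_telescope (fun x => if (v.2 k).1 = x then (1 : ℂ) else 0) (by omega)
  simp only [hchi, LinearMap.sum_apply, LinearMap.sub_apply, LinearMap.smul_apply,
    LinearMap.id_apply, hop, siteH, lift_single, Fin.ext_iff]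
  rw [Finset.sum_sub_distrib, ← Finset.sum_smul, ← Finset.sum_smul, hχ, Finset.sum_comm, Finset.sum_congr rfl fun k _ => hk k]
  rw [← Finset.sum_smul]
  simp only [Finset.sum_sub_distrib]
  module

theorem fop_pos (hL : 0 < L) (b : ℕ) (hb : b < L) (hb1 : 1 ≤ b) :
    fop n L hL b hb = ∑ k, siteOp n L 0 ⟨L - b - 1, by omega⟩ ⟨L - b, by omega⟩ k := by
  unfold fop
  rw [dif_neg (by omega)]
  exact Finset.sum_congr rfl fun k _ => matE_eq n L k _ _

theorem fop_zero (hL : 0 < L) :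
    fop n L hL 0 hL = ∑ k, siteOp n L (-1) ⟨L - 1, by omega⟩ ⟨0, hL⟩ k := by
  unfold fop
  rw [dif_pos rfl]
  exact Finset.sum_congr rfl fun k _ => zshift_matE n L k _ _ _

theorem fop_eq_sum (hL : 0 < L) (b : ℕ) (hb : b < L) :
    ∃ (δ : ℤ) (p q : Fin L), fop n L hL b hb = ∑ k, siteOp n L δ p q k := by
  rcases Nat.eq_zero_or_pos b with rfl | h
  · exact ⟨_, _, _, fop_zero n L hL⟩
  · exact ⟨_, _, _, fop_pos n L hL b hb h⟩

/-! ### Invariance of the subspace -/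

theorem mem_Usub_hchi (hL : 0 < L) (χ : ℕ → ℂ) {b : ℕ} (h1 : 1 ≤ b) (h2 : b < L) (v : Vsp n L) :
    hchi n L χ b v ∈ Usub n L hL χ :=
  Submodule.mem_sup_left (Submodule.mem_iSup_of_mem b
    (Submodule.mem_iSup_of_mem (Finset.mem_Ico.2 ⟨h1, h2⟩) (LinearMap.mem_range_self _ v)))

theorem mem_Usub_fop (hL : 0 < L) (χ : ℕ → ℂ) {b : ℕ} (h : b < L) (v : Vsp n L) :
    fop n L hL b h v ∈ Usub n L hL χ :=
  Submodule.mem_sup_right (Submodule.mem_iSup_of_mem ⟨b, h⟩ (LinearMap.mem_range_self _ v))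

/-- For an operator preserving weights, only the ranges of the `f_b` have to be checked. -/
theorem map_Usub_le (hL : 0 < L) (χ : ℕ → ℂ) (T : Vsp n L →ₗ[ℂ] Vsp n L)
    (hh : ∀ b, (T : Module.End ℂ (Vsp n L)) * hop n L b = (hop n L b : Module.End ℂ (Vsp n L)) * T)
    (hf : ∀ b hb v, T (fop n L hL b hb v) ∈ Usub n L hL χ) :
    Submodule.map T (Usub n L hL χ) ≤ Usub n L hL χ := by
  rw [Submodule.map_le_iff_le_comap]
  conv_lhs => unfold Usub
  refine sup_le (iSup₂_le fun b hb => ?_) (iSup_le fun b => ?_)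
  · rintro _ ⟨v, rfl⟩
    rw [Finset.mem_Ico] at hb
    have e : T (hchi n L χ b v) = hchi n L χ b (T v) := by
      have := LinearMap.congr_fun (hh b) v
      simp only [Module.End.mul_apply] at this
      simp only [hchi, LinearMap.sub_apply, LinearMap.smul_apply, LinearMap.id_apply, map_sub,
        map_smul, this]
    rw [Submodule.mem_comap, e]
    exact mem_Usub_hchi n L hL χ hb.1 hb.2 _
  · rintro _ ⟨v, rfl⟩
    exact hf _ _ _

/-- The eigenvalue of `h_b` on a basis vector with spins `s`. -/
def weight (b : ℕ) (s : Fin n → Fin L) : ℂ :=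
  ∑ i : Fin n, ((if (s i).1 = L - b then (1 : ℂ) else 0)
      - (if (s i).1 = L - b - 1 then (1 : ℂ) else 0))

theorem hop_single (b : ℕ) (p : Bas n L) :
    hop n L b (Finsupp.single p 1) = weight n L b p.2 • Finsupp.single p 1 := by
  simp only [hop, lift_single, weight]

theorem weight_swap (b : ℕ) (s : Fin n → Fin L) (i j : Fin n) :
    weight n L b (s ∘ Equiv.swap i j) = weight n L b s :=
  Equiv.sum_comp (Equiv.swap i j) fun k => ((if (s k).1 = L - b then (1 : ℂ) else 0)
      - (if (s k).1 = L - b - 1 then (1 : ℂ) else 0))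

theorem pairOp_hop (b : ℕ) (i j : Fin n) :
    pairOp n L i j * hop n L b = hop n L b * pairOp n L i j := by
  apply ext_bas
  intro p
  simp only [Module.End.mul_apply, hop_single, map_smul, pairOp, lift_single, Osp_eq, rsp, map_add,
    map_signedSum, weight_swap]
  simp only [signedSum, ← Finset.smul_sum]
  module

theorem dunkl_hop (κ : ℂ) (ν : Fin L → ℂ) (b : ℕ) (i : Fin n) :
    (dunkl n L κ ν i : Module.End ℂ (Vsp n L)) * hop n L b
      = (hop n L b : Module.End ℂ (Vsp n L)) * dunkl n L κ ν i := by
  have hD : diagOp n L κ ν i * hop n L b = hop n L b * diagOp n L κ ν i := by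
    apply ext_bas
    intro p
    simp only [Module.End.mul_apply, hop_single, map_smul, diagOp, lift_single]
    rw [smul_comm]
  have hS : ∀ j, signedPair n L i j * hop n L b = hop n L b * signedPair n L i j := by
    intro j
    unfold signedPair
    split_ifs
    · exact pairOp_hop n L b i j
    · rw [smul_mul_assoc, mul_smul_comm, pairOp_hop]
    · simp
  rw [dunkl_eq, add_mul, mul_add, hD, Finset.sum_mul, Finset.mul_sum,
    Finset.sum_congr rfl fun j _ => hS j]

theorem zshift_hop (b : ℕ) (i : Fin n) (d : ℤ) :
    (zshift n L i d : Module.End ℂ (Vsp n L)) * hop n L b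
      = (hop n L b : Module.End ℂ (Vsp n L)) * zshift n L i d := by
  apply ext_bas
  intro p
  simp only [Module.End.mul_apply, hop_single, map_smul, zshift, lift_single]

theorem zshift_siteOp (i k : Fin n) (d δ : ℤ) (p q : Fin L) :
    (zshift n L i d : Module.End ℂ (Vsp n L)) * siteOp n L δ p q k
      = siteOp n L δ p q k * zshift n L i d := by
  apply ext_bas
  intro v
  simp only [Module.End.mul_apply, zshift, siteOp, lift_single]
  by_cases h : v.2 k = q
  · simp only [h, if_true, lift_single]
    congr 2
    funext l
    by_cases hik : i = k
    · subst hik; simp [add_right_comm]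
    · simp only [Function.update_of_ne hik, Function.update_of_ne (Ne.symm hik)]
      rw [Function.update_comm hik]
  · simp [h]

theorem swapOp_hop (b : ℕ) (i j : Fin n) :
    (swapOp n L i j : Module.End ℂ (Vsp n L)) * hop n L b
      = (hop n L b : Module.End ℂ (Vsp n L)) * swapOp n L i j := by
  apply ext_bas
  intro p
  simp only [Module.End.mul_apply, hop_single, map_smul, swapOp, lift_single, weight_swap]

theorem swapOp_siteOp (i j k : Fin n) (δ : ℤ) (p q : Fin L) :
    (swapOp n L i j : Module.End ℂ (Vsp n L)) * siteOp n L δ p q k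
      = siteOp n L δ p q (Equiv.swap i j k) * swapOp n L i j := by
  apply ext_bas
  intro v
  simp only [Module.End.mul_apply, swapOp, siteOp, lift_single, Function.comp_apply,
    Equiv.swap_apply_self]
  by_cases h : v.2 k = q
  · simp only [h, if_true, lift_single, Function.update_comp_equiv, Equiv.symm_swap]
  · simp [h]

theorem zshift_fop (hL : 0 < L) (b : ℕ) (hb : b < L) (i : Fin n) (d : ℤ) (v : Vsp n L) :
    zshift n L i d (fop n L hL b hb v) = fop n L hL b hb (zshift n L i d v) := by
  obtain ⟨δ, p, q, e⟩ := fop_eq_sum n L hL b hb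
  rw [e, LinearMap.sum_apply, LinearMap.sum_apply, map_sum]
  exact Finset.sum_congr rfl fun k _ => LinearMap.congr_fun (zshift_siteOp n L i k d δ p q) v

theorem swapOp_fop (hL : 0 < L) (b : ℕ) (hb : b < L) (i j : Fin n) (v : Vsp n L) :
    swapOp n L i j (fop n L hL b hb v) = fop n L hL b hb (swapOp n L i j v) := by
  obtain ⟨δ, p, q, e⟩ := fop_eq_sum n L hL b hb
  rw [e, LinearMap.sum_apply, LinearMap.sum_apply, map_sum,
    ← Equiv.sum_comp (Equiv.swap i j) fun k => siteOp n L δ p q k (swapOp n L i j v)]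
  exact Finset.sum_congr rfl fun k _ => LinearMap.congr_fun (swapOp_siteOp n L i j k δ p q) v

/-- with `κ = L` and `ν(a) = a + χ(a)/2`, the Dunkl operators satisfy
`[d_i, f_a] = ½ h_a^χ (e_{L−a,L−a+1})_i + ½ f_a((e_{L−a,L−a})_i − (e_{L−a+1,L−a+1})_i)`
for `a = 1,…,L−1`, and
`[d_i, f_0] = −½(h_1^χ+⋯+h_{L−1}^χ) z_i^{−1}(e_{L1})_i + ½ f_0((e_{LL})_i − (e_{11})_i)`;
consequently all generators of `π_{κ,ν}(H_n)` leave `U'(b^χ)·𝔙` invariant. -/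
theorem statement_9 (hL : 2 ≤ L) (hn : 1 ≤ n)
    (χ : ℕ → ℂ) (κ : ℂ) (ν : Fin L → ℂ)
    (hκ : κ = (L : ℂ)) (hν : ∀ a : Fin L, ν a = ((a.1 + 1 : ℕ) : ℂ) + χ (a.1 + 1) / 2) :
    (∀ (i : Fin n) (a : ℕ) (ha1 : 1 ≤ a) (ha2 : a < L),
      dunkl n L κ ν i ∘ₗ fop n L (by omega) a ha2
          - fop n L (by omega) a ha2 ∘ₗ dunkl n L κ ν i
        = (1 / 2 : ℂ) • (hchi n L χ a ∘ₗ matE n L i ⟨L - a - 1, by omega⟩ ⟨L - a, by omega⟩)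
          + (1 / 2 : ℂ) • (fop n L (by omega) a ha2 ∘ₗ
              (matE n L i ⟨L - a - 1, by omega⟩ ⟨L - a - 1, by omega⟩
                - matE n L i ⟨L - a, by omega⟩ ⟨L - a, by omega⟩))) ∧
    (∀ i : Fin n,
      dunkl n L κ ν i ∘ₗ fop n L (by omega) 0 (by omega)
          - fop n L (by omega) 0 (by omega) ∘ₗ dunkl n L κ ν i
        = (-(1 / 2) : ℂ) • ((∑ a ∈ Finset.Ico 1 L, hchi n L χ a) ∘ₗ
              (zshift n L i (-1) ∘ₗ matE n L i ⟨L - 1, by omega⟩ ⟨0, by omega⟩))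
          + (1 / 2 : ℂ) • (fop n L (by omega) 0 (by omega) ∘ₗ
              (matE n L i ⟨L - 1, by omega⟩ ⟨L - 1, by omega⟩
                - matE n L i ⟨0, by omega⟩ ⟨0, by omega⟩))) ∧
    (∀ T : Vsp n L →ₗ[ℂ] Vsp n L,
      ((∃ i : Fin n, T = dunkl n L κ ν i) ∨
       (∃ (i : Fin n) (d : ℤ), (d = 1 ∨ d = -1) ∧ T = zshift n L i d) ∨
       (∃ (k : ℕ) (hk : k + 1 < n), T = swapOp n L ⟨k, by omega⟩ ⟨k + 1, hk⟩)) →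
      Submodule.map T (Usub n L (by omega) χ) ≤ Usub n L (by omega) χ) := by
  subst hκ
  have comm_pos : ∀ (i : Fin n) (a : ℕ) (ha1 : 1 ≤ a) (ha2 : a < L),
      dunkl n L (L : ℂ) ν i ∘ₗ fop n L (by omega) a ha2
          - fop n L (by omega) a ha2 ∘ₗ dunkl n L (L : ℂ) ν i
        = (1 / 2 : ℂ) • (hchi n L χ a ∘ₗ matE n L i ⟨L - a - 1, by omega⟩ ⟨L - a, by omega⟩)
          + (1 / 2 : ℂ) • (fop n L (by omega) a ha2 ∘ₗ
              (matE n L i ⟨L - a - 1, by omega⟩ ⟨L - a - 1, by omega⟩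
                - matE n L i ⟨L - a, by omega⟩ ⟨L - a, by omega⟩)) := by
    intro i a ha1 ha2
    rw [hchi, hop_eq n L a ha1 ha2, fop_pos n L _ a ha2 ha1, matE_eq, matE_eq, matE_eq]
    refine dunkl_comm_sub n L (Or.inl ⟨rfl, ?_⟩) _ _ ν ?_ i
    · simp only; omega
    · rw [hν, hν]
      simp only
      rw [show L - a - 1 + 1 = L - a by omega, show L + 1 - a = L - a + 1 by omega]
      push_cast
      ring
  have comm_zero : ∀ i : Fin n,
      dunkl n L (L : ℂ) ν i ∘ₗ fop n L (by omega) 0 (by omega)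
          - fop n L (by omega) 0 (by omega) ∘ₗ dunkl n L (L : ℂ) ν i
        = (-(1 / 2) : ℂ) • ((∑ a ∈ Finset.Ico 1 L, hchi n L χ a) ∘ₗ
              (zshift n L i (-1) ∘ₗ matE n L i ⟨L - 1, by omega⟩ ⟨0, by omega⟩))
          + (1 / 2 : ℂ) • (fop n L (by omega) 0 (by omega) ∘ₗ
              (matE n L i ⟨L - 1, by omega⟩ ⟨L - 1, by omega⟩
                - matE n L i ⟨0, by omega⟩ ⟨0, by omega⟩)) := by
    intro i
    rw [sum_hchi n L hL χ, fop_zero n L, zshift_matE, matE_eq, matE_eq, LinearMap.smul_comp,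
      smul_smul, show (-(1 / 2) * -1 : ℂ) = 1 / 2 by norm_num]
    refine dunkl_comm_sub n L (Or.inr ⟨rfl, ?_, rfl, ?_⟩) _ _ ν ?_ i
    · simp only; omega
    · simp only [ne_eq, Fin.mk.injEq]; omega
    · rw [hν, hν]
      simp only
      rw [show L - 1 + 1 = L by omega]
      push_cast
      ring
  refine ⟨comm_pos, comm_zero, ?_⟩
  have hL0 : 0 < L := by omega
  rintro T (⟨i, rfl⟩ | ⟨i, d, -, rfl⟩ | ⟨k, hk, rfl⟩)
  · refine map_Usub_le n L hL0 χ _ (fun b => dunkl_hop n L _ ν b i) fun b hb v => ?_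
    rcases Nat.eq_zero_or_pos b with rfl | hb1
    · have e := LinearMap.congr_fun (comm_zero i) v
      rw [LinearMap.sub_apply, sub_eq_iff_eq_add] at e
      simp only [LinearMap.comp_apply] at e
      rw [e]
      refine add_mem (add_mem (Submodule.smul_mem _ _ ?_) (Submodule.smul_mem _ _ ?_)) ?_
      · rw [LinearMap.comp_apply, LinearMap.sum_apply]
        refine sum_mem fun a ha => ?_
        rw [Finset.mem_Ico] at ha
        exact mem_Usub_hchi n L hL0 χ ha.1 ha.2 _
      · exact mem_Usub_fop n L hL0 χ hb _
      · exact mem_Usub_fop n L hL0 χ hb _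
    · have e := LinearMap.congr_fun (comm_pos i b hb1 hb) v
      rw [LinearMap.sub_apply, sub_eq_iff_eq_add] at e
      simp only [LinearMap.comp_apply] at e
      rw [e]
      refine add_mem (add_mem (Submodule.smul_mem _ _ ?_) (Submodule.smul_mem _ _ ?_)) ?_
      · exact mem_Usub_hchi n L hL0 χ hb1 hb _
      · exact mem_Usub_fop n L hL0 χ hb _
      · exact mem_Usub_fop n L hL0 χ hb _
  · refine map_Usub_le n L hL0 χ _ (fun b => zshift_hop n L b i d) fun b hb v => ?_
    rw [zshift_fop]
    exact mem_Usub_fop n L hL0 χ hb _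
  · refine map_Usub_le n L hL0 χ _ (fun b => swapOp_hop n L b _ _) fun b hb v => ?_
    rw [swapOp_fop]
    exact mem_Usub_fop n L hL0 χ hb _

end Dunkl

end
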